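/- arXiv:1603.09159 — 3 statements merged into one kernel-verified Lean document; each statement's English description precedes it below -/
import Mathlib

section
/- Let (X,d) be a metric space, R a binary relation on X, Y an R-complete subspace of X, and f, g two self-mappings on X. Suppose: (a) f(X) ⊆ g(X) ∩ Y; (b) R is (f,g)-closed; (c) there exists x₀ ∈ X with (g x₀, f x₀) ∈ R; (d) there exists α ∈ [0,1) such that d(f x, f y) ≤ α·d(g x, g y) for all x,y ∈ X with (g x, g y) ∈ R; (e1) f and g are R-compatible; (e2) g is R-continuous; (e3) R is (g,d)-self-closed. Then f and g have a coincidence point, i.e. there exists z ∈ X with g z = f z. -/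
open Filter

/-!
Since `f` takes values in the range of `g`, one can solve `g (s (n + 1)) = f (s n)` recursively from
`x₀`. Along `s` the map `f` contracts successive distances by the factor `α`, so `f ∘ s` is Cauchy
and has a limit `z`, which is also the limit of its shift `g ∘ s`. Continuity of `g` and
compatibility make `f (g (s n))` tend to `g z`, while self-closedness lets the contraction compare
`f (g (s n))` with `f z` along a subsequence, where it tends to `f z`. Uniqueness of limits gives
`g z = f z`.
-/

open scoped Topology
open Relation (SymmGen)

section Definitions

variable {X Y : Type*}

/-- `R`-preserving sequences: consecutive terms are related by `R`. -/
def RelPreserving (R : X → X → Prop) (s : ℕ → X) : Prop :=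
  ∀ n, R (s n) (s (n + 1))

/-- Picard–Jungck sequences of the pair `(f, g)`, which replace the orbits of a single map `f`
(the case `g = id`). -/
def IsJungckSeq (f g : X → Y) (s : ℕ → X) : Prop :=
  ∀ n, g (s (n + 1)) = f (s n)

/-- `R`-continuity: sequential continuity tested on `R`-preserving sequences only. -/
def RelContinuous [TopologicalSpace X] [TopologicalSpace Y] (R : X → X → Prop) (h : X → Y) :
    Prop :=
  ∀ (s : ℕ → X) (x : X), RelPreserving R s → Tendsto s atTop (𝓝 x) →
    Tendsto (h ∘ s) atTop (𝓝 (h x))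

/-- `R`-compatibility: `f` and `g` asymptotically commute along each sequence on which both are
`R`-preserving and converge to a common limit. -/
def RelCompatible [PseudoMetricSpace X] (R : X → X → Prop) (f g : X → X) : Prop :=
  ∀ (s : ℕ → X) (z : X), RelPreserving R (f ∘ s) → RelPreserving R (g ∘ s) →
    Tendsto (g ∘ s) atTop (𝓝 z) → Tendsto (f ∘ s) atTop (𝓝 z) →
    Tendsto (fun n ↦ dist (g (f (s n))) (f (g (s n)))) atTop (𝓝 0)

/-- `(g, d)`-self-closedness of `R`: a convergent `R`-preserving sequence has a subsequence whose
images under `g` are comparable with the image of the limit. The paper's `[x, y] ∈ R` is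
`SymmGen R x y`, and `d` enters only through its topology. -/
def RelSelfClosed [TopologicalSpace X] (R : X → X → Prop) (g : X → X) : Prop :=
  ∀ (s : ℕ → X) (x : X), RelPreserving R s → Tendsto s atTop (𝓝 x) →
    ∃ φ : ℕ → ℕ, StrictMono φ ∧ ∀ k, SymmGen R (g (s (φ k))) (g x)

end Definitions

namespace IsJungckSeq

variable {X Y : Type*} {f g : X → Y} {s : ℕ → X}

theorem exists_of_range_subset (hfg : Set.range f ⊆ Set.range g) (x₀ : X) :
    ∃ s : ℕ → X, s 0 = x₀ ∧ IsJungckSeq f g s := by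
  choose p hp using fun x ↦ hfg (Set.mem_range_self x)
  refine ⟨fun n ↦ p^[n] x₀, rfl, fun n ↦ ?_⟩
  simp only [Function.iterate_succ_apply', hp]

theorem relPreserving {R : Y → Y → Prop} (hs : IsJungckSeq f g s)
    (hclosed : ∀ x y, R (g x) (g y) → R (f x) (f y)) (h₀ : R (g (s 0)) (f (s 0))) :
    RelPreserving R (g ∘ s) := by
  intro n
  induction n with
  | zero => simpa only [Function.comp_apply, hs 0] using h₀
  | succ n ih => simpa only [Function.comp_apply, hs _] using hclosed _ _ ih

theorem tendsto_comp_iff {l : Filter Y} (hs : IsJungckSeq f g s) :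
    Tendsto (g ∘ s) atTop l ↔ Tendsto (f ∘ s) atTop l := by
  rw [← tendsto_add_atTop_iff_nat 1]
  exact tendsto_congr hs

end IsJungckSeq

theorem cauchySeq_of_dist_succ_le_mul {E : Type*} [PseudoMetricSpace E] {u : ℕ → E} {α : ℝ}
    (hα : α < 1) (hu : ∀ n, dist (u (n + 1)) (u (n + 2)) ≤ α * dist (u n) (u (n + 1))) :
    CauchySeq u := by
  refine cauchySeq_of_summable_dist <|
    summable_of_ratio_norm_eventually_le hα (.of_forall fun n ↦ ?_)
  simpa only [Real.norm_of_nonneg dist_nonneg] using hu n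

section Contraction

variable {X E : Type*} [PseudoMetricSpace E] {R : E → E → Prop} {f g : X → E} {α : ℝ}

theorem IsJungckSeq.cauchySeq {s : ℕ → X} (hs : IsJungckSeq f g s) (hα : α < 1)
    (hcontr : ∀ x y, R (g x) (g y) → dist (f x) (f y) ≤ α * dist (g x) (g y))
    (hgs : RelPreserving R (g ∘ s)) : CauchySeq (f ∘ s) := by
  refine cauchySeq_of_dist_succ_le_mul hα fun n ↦ ?_
  simpa only [Function.comp_apply, hs _] using hcontr _ _ (hgs (n + 1))

theorem dist_le_mul_dist_of_symmGen
    (hcontr : ∀ x y, R (g x) (g y) → dist (f x) (f y) ≤ α * dist (g x) (g y)) {x y : X}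
    (hxy : SymmGen R (g x) (g y)) : dist (f x) (f y) ≤ α * dist (g x) (g y) := by
  rcases hxy with h | h
  · exact hcontr x y h
  · simpa only [dist_comm] using hcontr y x h

theorem tendsto_comp_of_eventually_symmGen {ι : Type*} {l : Filter ι} {u : ι → X} {z : X}
    (hcontr : ∀ x y, R (g x) (g y) → dist (f x) (f y) ≤ α * dist (g x) (g y))
    (hR : ∀ᶠ i in l, SymmGen R (g (u i)) (g z)) (hg : Tendsto (g ∘ u) l (𝓝 (g z))) :
    Tendsto (f ∘ u) l (𝓝 (f z)) := by
  rw [tendsto_iff_dist_tendsto_zero] at hg ⊢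
  refine squeeze_zero' (.of_forall fun _ ↦ dist_nonneg)
    (hR.mono fun _ ↦ dist_le_mul_dist_of_symmGen hcontr) ?_
  simpa only [Function.comp_apply, mul_zero] using hg.const_mul α

end Contraction

section Coincidence

variable {X : Type*} [PseudoMetricSpace X] {R : X → X → Prop} {f g : X → X}

theorem RelCompatible.tendsto_comp_comp {s : ℕ → X} {z : X} (hcompat : RelCompatible R f g)
    (hcont : RelContinuous R g) (hfR : RelPreserving R (f ∘ s)) (hgR : RelPreserving R (g ∘ s))
    (hf : Tendsto (f ∘ s) atTop (𝓝 z)) (hg : Tendsto (g ∘ s) atTop (𝓝 z)) :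
    Tendsto (f ∘ g ∘ s) atTop (𝓝 (g z)) :=
  (tendsto_iff_of_dist (hcompat s z hfR hgR hg hf)).1 (hcont _ z hfR hf)

theorem coincidence_e_gdSelfClosed_general {α : ℝ}
    (hcomplete : ∀ s : ℕ → X, RelPreserving R (f ∘ s) → CauchySeq (f ∘ s) →
      ∃ z, Tendsto (f ∘ s) atTop (𝓝 z))
    (hrange : Set.range f ⊆ Set.range g) (hclosed : ∀ x y, R (g x) (g y) → R (f x) (f y))
    (hstart : ∃ x₀, R (g x₀) (f x₀)) (hα : α < 1)
    (hcontr : ∀ x y, R (g x) (g y) → dist (f x) (f y) ≤ α * dist (g x) (g y))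
    (hcompat : RelCompatible R f g) (hcont : RelContinuous R g) (hself : RelSelfClosed R g) :
    ∃ z, Inseparable (g z) (f z) := by
  obtain ⟨x₀, hx₀⟩ := hstart
  obtain ⟨s, rfl, hs⟩ := IsJungckSeq.exists_of_range_subset hrange x₀
  have hgR : RelPreserving R (g ∘ s) := hs.relPreserving hclosed hx₀
  have hfR : RelPreserving R (f ∘ s) := fun n ↦ hclosed _ _ (hgR n)
  obtain ⟨z, hf⟩ := hcomplete s hfR (hs.cauchySeq hα hcontr hgR)
  have hg : Tendsto (g ∘ s) atTop (𝓝 z) := hs.tendsto_comp_iff.2 hf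
  obtain ⟨φ, hφ, hφR⟩ := hself _ z hgR hg
  have hfg_gz : Tendsto (f ∘ g ∘ s ∘ φ) atTop (𝓝 (g z)) :=
    (hcompat.tendsto_comp_comp hcont hfR hgR hf hg).comp hφ.tendsto_atTop
  have hfg_fz : Tendsto (f ∘ g ∘ s ∘ φ) atTop (𝓝 (f z)) :=
    tendsto_comp_of_eventually_symmGen hcontr (.of_forall hφR)
      ((hcont _ z hgR hg).comp hφ.tendsto_atTop)
  exact ⟨z, tendsto_nhds_unique_inseparable hfg_gz hfg_fz⟩

end Coincidence

/-- Theorem 2, case (e) with `R` `(g,d)`-self-closed: existence of a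
coincidence point of `f` and `g`. -/
theorem coincidence_e_gdSelfClosed {X : Type*} [MetricSpace X]
    (R : X → X → Prop) (Y : Set X) (f g : X → X)
    (hY : ∀ s : ℕ → X, (∀ n, s n ∈ Y) → (∀ n, R (s n) (s (n + 1))) → CauchySeq s →
      ∃ y ∈ Y, Tendsto s atTop (nhds y))
    (ha : ∀ x : X, f x ∈ Set.range g ∩ Y)
    (hb : ∀ x y : X, R (g x) (g y) → R (f x) (f y))
    (hc : ∃ x₀ : X, R (g x₀) (f x₀))
    (hd : ∃ α : ℝ, 0 ≤ α ∧ α < 1 ∧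
      ∀ x y : X, R (g x) (g y) → dist (f x) (f y) ≤ α * dist (g x) (g y))
    (he1 : ∀ (s : ℕ → X) (z : X),
      (∀ n, R (f (s n)) (f (s (n + 1)))) → (∀ n, R (g (s n)) (g (s (n + 1)))) →
      Tendsto (fun n => g (s n)) atTop (nhds z) →
      Tendsto (fun n => f (s n)) atTop (nhds z) →
      Tendsto (fun n => dist (g (f (s n))) (f (g (s n)))) atTop (nhds 0))
    (he2 : ∀ (s : ℕ → X) (x : X), (∀ n, R (s n) (s (n + 1))) →
      Tendsto s atTop (nhds x) →
      Tendsto (fun n => g (s n)) atTop (nhds (g x)))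
    (he3 : ∀ (s : ℕ → X) (x : X), (∀ n, R (s n) (s (n + 1))) →
      Tendsto s atTop (nhds x) →
      ∃ φ : ℕ → ℕ, StrictMono φ ∧
        ∀ k, R (g (s (φ k))) (g x) ∨ R (g x) (g (s (φ k)))) :
    ∃ z : X, g z = f z := by
  obtain ⟨α, -, hα, hcontr⟩ := hd
  obtain ⟨z, hz⟩ := coincidence_e_gdSelfClosed_general
    (fun s hR hC ↦ (hY (f ∘ s) (fun n ↦ (ha (s n)).2) hR hC).imp fun _ ↦ And.right)
    (Set.range_subset_iff.2 fun x ↦ (ha x).1) hb hc hα hcontr he1 he2 he3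
  exact ⟨z, hz.eq⟩
end

section
/- Let (X,d) be a metric space, R a binary relation on X, and f, g two self-mappings on X. Suppose: (a) f(X) ⊆ g(X); (b) R is (f,g)-closed; (d) there exists α ∈ [0,1) such that d(f x, f y) ≤ α·d(g x, g y) for all x,y ∈ X with (g x, g y) ∈ R; and (u₁) f(X) is (R|_{g(X)})^s-connected, i.e. for every pair of points u, v ∈ f(X) there is a path in (R|_{g(X)})^s from u to v. Then any two points of coincidence of f and g are equal: if x̄ = g x = f x and ȳ = g y = f y for some x, y ∈ X, then x̄ = ȳ. In particular, if in addition f and g have a coincidence point (as guaranteed under the hypotheses of the main coincidence theorem), then f and g have a unique point of coincidence. -/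
/-!
Lift `f` through `g` to a self-map `h` of the domain that fixes every coincidence point. With
respect to the distance pulled back along `g`, `h` contracts every pair related by `R`, and such
pairs stay related. Hence the iterates of two points joined by a chain of such pairs become
arbitrarily close; two coincidence points do not move at all, so their values are at distance `0`.
-/

open Filter Function Relation Set Topology
open scoped NNReal

section Iterate

variable {X : Type*} [PseudoMetricSpace X] {r : X → X → Prop} {h : X → X} {K : ℝ≥0} {a b : X}

lemma dist_iterate_le_of_rel (h_rel : ∀ x y, r x y → r (h x) (h y))
    (h_dist : ∀ x y, r x y → dist (h x) (h y) ≤ K * dist x y) (hab : r a b) (n : ℕ) :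
    dist (h^[n] a) (h^[n] b) ≤ K ^ n * dist a b := by
  induction n generalizing a b with
  | zero => simp
  | succ n ih =>
    calc dist (h^[n] (h a)) (h^[n] (h b))
      _ ≤ K ^ n * dist (h a) (h b) := ih (h_rel a b hab)
      _ ≤ K ^ n * (K * dist a b) := by gcongr; exact h_dist a b hab
      _ = K ^ (n + 1) * dist a b := by ring

lemma tendsto_dist_iterate_of_rel (hK : K < 1) (h_rel : ∀ x y, r x y → r (h x) (h y))
    (h_dist : ∀ x y, r x y → dist (h x) (h y) ≤ K * dist x y) (hab : r a b) :
    Tendsto (fun n ↦ dist (h^[n] a) (h^[n] b)) atTop (𝓝 0) := by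
  refine squeeze_zero (fun _ ↦ dist_nonneg) (dist_iterate_le_of_rel h_rel h_dist hab) ?_
  simpa using (tendsto_pow_atTop_nhds_zero_of_lt_one K.coe_nonneg hK).mul_const (dist a b)

lemma tendsto_dist_iterate_of_eqvGen (hK : K < 1) (h_rel : ∀ x y, r x y → r (h x) (h y))
    (h_dist : ∀ x y, r x y → dist (h x) (h y) ≤ K * dist x y) (hab : EqvGen r a b) :
    Tendsto (fun n ↦ dist (h^[n] a) (h^[n] b)) atTop (𝓝 0) := by
  induction hab with
  | rel x y hxy => exact tendsto_dist_iterate_of_rel hK h_rel h_dist hxy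
  | refl x => simp
  | symm x y _ ih => simpa only [dist_comm] using ih
  | trans x y z _ _ ihxy ihyz =>
    refine squeeze_zero (fun _ ↦ dist_nonneg) (fun n ↦ dist_triangle _ (h^[n] y) _) ?_
    simpa only [add_zero] using ihxy.add ihyz

lemma dist_eq_zero_of_isFixedPt_of_eqvGen (hK : K < 1) (h_rel : ∀ x y, r x y → r (h x) (h y))
    (h_dist : ∀ x y, r x y → dist (h x) (h y) ≤ K * dist x y) (hab : EqvGen r a b)
    (ha : IsFixedPt h a) (hb : IsFixedPt h b) : dist a b = 0 := by
  have h_lim := tendsto_dist_iterate_of_eqvGen hK h_rel h_dist hab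
  simp only [(ha.iterate _).eq, (hb.iterate _).eq] at h_lim
  exact tendsto_nhds_unique tendsto_const_nhds h_lim

end Iterate

/-- The relation `(R|_E)^s`: the symmetric closure of the restriction of `R` to `E`. -/
def symmRestrict {Y : Type*} (R : Y → Y → Prop) (E : Set Y) (u v : Y) : Prop :=
  SymmGen R u v ∧ u ∈ E ∧ v ∈ E

/-- The points of coincidence of `f` and `g`: the common values of the two maps at their
coincidence points, as opposed to the coincidence points themselves. -/
def pointsOfCoincidence {X Y : Type*} (f g : X → Y) : Set Y :=
  {w | ∃ x, w = g x ∧ w = f x}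

section Lift

variable {X Y : Type*} {R : Y → Y → Prop} {f g : X → Y}

lemma exists_lift_isFixedPt_of_eq (hfg : range f ⊆ range g) :
    ∃ h : X → X, (∀ a, g (h a) = f a) ∧ ∀ a, g a = f a → IsFixedPt h a := by
  have h_lift (a : X) : ∃ b, g b = f a ∧ (g a = f a → b = a) := by
    by_cases ha : g a = f a
    · exact ⟨a, ha, fun _ ↦ rfl⟩
    · obtain ⟨b, hb⟩ := hfg (mem_range_self a)
      exact ⟨b, hb, fun h ↦ absurd h ha⟩
  choose h hgh h_fix using h_lift
  exact ⟨h, hgh, h_fix⟩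

-- A chain with no edges would only give `g x = g y`, which does not relate `x` to `y`.
lemma eqvGen_onFun_of_transGen_symmRestrict {x y : X}
    (hxy : TransGen (symmRestrict R (range g)) (g x) (g y)) : EqvGen (R on g) x y := by
  have h_edge {a b : X} (hab : symmRestrict R (range g) (g a) (g b)) : EqvGen (R on g) a b :=
    hab.1.elim (fun h ↦ .rel a b h) fun h ↦ .symm b a (.rel b a h)
  generalize hv : g y = v at hxy
  induction hxy generalizing y with
  | single h => subst hv; exact h_edge h
  | tail _ h ih =>
    subst hv
    obtain ⟨w, rfl⟩ := h.2.1
    exact (ih rfl).trans _ _ _ (h_edge h)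

lemma reflTransGen_of_forall_lt {r : Y → Y → Prop} {k : ℕ} {z : ℕ → Y}
    (hz : ∀ i < k, r (z i) (z (i + 1))) : ReflTransGen r (z 0) (z k) :=
  (reflTransGen_of_succ_of_le (fun i j ↦ r (z i) (z j)) (fun i hi ↦ hz i hi.2) k.zero_le).lift z
    fun _ _ ↦ id

lemma subset_of_reflTransGen_symmRestrict {E S : Set Y} (hS : S.Nontrivial)
    (h_conn : ∀ u ∈ S, ∀ v ∈ S, ReflTransGen (symmRestrict R E) u v) : S ⊆ E := by
  intro u hu
  obtain ⟨v, hv, hvu⟩ := hS.exists_ne u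
  obtain huv | ⟨_, h_edge, -⟩ := (h_conn u hu v hv).cases_head
  · exact absurd huv.symm hvu
  · exact h_edge.2.1

end Lift

theorem unique_point_of_coincidence_general {X Y : Type*} [MetricSpace Y] {R : Y → Y → Prop}
    {f g : X → Y} {K : ℝ≥0} (hK : K < 1) (h_rel : ∀ x y, R (g x) (g y) → R (f x) (f y))
    (h_dist : ∀ x y, R (g x) (g y) → dist (f x) (f y) ≤ K * dist (g x) (g y))
    (h_conn : ∀ u ∈ range f, ∀ v ∈ range f, ReflTransGen (symmRestrict R (range g)) u v) :
    (pointsOfCoincidence f g).Subsingleton := by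
  rintro _ ⟨x, rfl, hx⟩ _ ⟨y, rfl, hy⟩
  by_contra h_ne
  have hx_mem : g x ∈ range f := ⟨x, hx.symm⟩
  have hy_mem : g y ∈ range f := ⟨y, hy.symm⟩
  have hfg : range f ⊆ range g :=
    subset_of_reflTransGen_symmRestrict ⟨_, hx_mem, _, hy_mem, h_ne⟩ h_conn
  obtain ⟨h, hgh, h_fix⟩ := exists_lift_isFixedPt_of_eq hfg
  have h_eqv : EqvGen (R on g) x y := eqvGen_onFun_of_transGen_symmRestrict <|
    (reflTransGen_iff_eq_or_transGen.mp (h_conn _ hx_mem _ hy_mem)).resolve_left (Ne.symm h_ne)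
  let _ : PseudoMetricSpace X := .induced g inferInstance
  have h_zero : dist x y = 0 := dist_eq_zero_of_isFixedPt_of_eqvGen hK
    (fun a b hab ↦ by simpa only [onFun, hgh] using h_rel a b hab)
    (fun a b hab ↦ by
      change dist (g (h a)) (g (h b)) ≤ K * dist (g a) (g b)
      simpa only [hgh] using h_dist a b hab)
    h_eqv (h_fix x hx) (h_fix y hy)
  exact h_ne (dist_eq_zero.mp h_zero)

/-- Theorem 3: under (a), (b), (d) and the
`(R|_{g(X)})^s`-connectedness of `f(X)`, any two points of coincidence of `f` and
`g` are equal; in particular, if `f` and `g` have a coincidence point then they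
have a unique point of coincidence. -/
theorem unique_point_of_coincidence {X : Type*} [MetricSpace X]
    (R : X → X → Prop) (f g : X → X)
    (ha : ∀ x : X, f x ∈ Set.range g)
    (hb : ∀ x y : X, R (g x) (g y) → R (f x) (f y))
    (hd : ∃ α : ℝ, 0 ≤ α ∧ α < 1 ∧
      ∀ x y : X, R (g x) (g y) → dist (f x) (f y) ≤ α * dist (g x) (g y))
    (hu1 : ∀ u ∈ Set.range f, ∀ v ∈ Set.range f,
      ∃ (k : ℕ) (z : ℕ → X), z 0 = u ∧ z k = v ∧
        ∀ i < k, (R (z i) (z (i + 1)) ∨ R (z (i + 1)) (z i)) ∧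
          z i ∈ Set.range g ∧ z (i + 1) ∈ Set.range g) :
    (∀ x y xb yb : X, xb = g x → xb = f x → yb = g y → yb = f y → xb = yb) ∧
    ((∃ z : X, g z = f z) → ∃! w : X, ∃ x : X, w = g x ∧ w = f x) := by
  obtain ⟨α, hα0, hα1, hα⟩ := hd
  have h_sub : (pointsOfCoincidence f g).Subsingleton :=
    unique_point_of_coincidence_general (K := ⟨α, hα0⟩) hα1 hb hα fun u hu v hv ↦ by
      obtain ⟨k, z, rfl, rfl, hz⟩ := hu1 u hu v hv
      exact reflTransGen_of_forall_lt hz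
  exact ⟨fun x y _ _ hx hx' hy hy' ↦ h_sub ⟨x, hx, hx'⟩ ⟨y, hy, hy'⟩,
    fun ⟨z, hz⟩ ↦ ⟨g z, ⟨z, rfl, hz⟩, fun _ hw ↦ h_sub hw ⟨z, rfl, hz⟩⟩⟩
end

section
/- Let (X,d) be a metric space, R a binary relation on X, and f, g two self-mappings on X. Suppose: (a) f(X) ⊆ g(X); (b) R is (f,g)-closed; (d) there exists α ∈ [0,1) such that d(f x, f y) ≤ α·d(g x, g y) for all x,y ∈ X with (g x, g y) ∈ R; and (u₁″) f(X) is (R|_{g(X)})^s-directed, i.e. for every pair u, v ∈ f(X) there exists w ∈ g(X) such that [u,w] ∈ R|_{g(X)} and [v,w] ∈ R|_{g(X)}. Then any two points of coincidence of f and g are equal: if x̄ = g x = f x and ȳ = g y = f y for some x, y ∈ X, then x̄ = ȳ. -/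
/-!
If `p = f x = g x` and `g (s 0)` is comparable to `p`, then along any sequence with
`f (s n) = g (s (n + 1))` closedness keeps `g (s n)` comparable to `p`, so each step multiplies the
distance to `p` by at most `α` and `g (s n)` converges to `p`. A common comparable element `g (s 0)`
of two points of coincidence therefore starts one sequence converging to both.
-/

open Filter Topology Relation

section ClosedRelation

variable {X Y : Type*} {R : Y → Y → Prop} {f g : X → Y} {p : Y} {s : ℕ → X}

/-- The point `p` is a point of coincidence of `f` and `g`: their common value at some `x`. -/
def IsPointOfCoincidence (f g : X → Y) (p : Y) : Prop :=
  ∃ x, p = g x ∧ p = f x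

/-- The relation `R` is `(f, g)`-closed: it passes from values of `g` to values of `f`. -/
def IsRelClosed (R : Y → Y → Prop) (f g : X → Y) : Prop :=
  ∀ ⦃x y⦄, R (g x) (g y) → R (f x) (f y)

/-- A Jungck sequence of `f` and `g`, replacing the orbits of `f` (the case `g = id`) in
coincidence problems. It is encoded by the sequence `s` of arguments rather than by `g ∘ s`. -/
def IsJungckSequence (f g : X → Y) (s : ℕ → X) : Prop :=
  ∀ n, f (s n) = g (s (n + 1))

theorem IsRelClosed.symmGen (h : IsRelClosed R f g) : IsRelClosed (SymmGen R) f g :=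
  fun _ _ => Or.imp (@h _ _) (@h _ _)

theorem exists_isJungckSequence (h : ∀ x, f x ∈ Set.range g) (x₀ : X) :
    ∃ s, s 0 = x₀ ∧ IsJungckSequence f g s := by
  choose next g_next using h
  refine ⟨fun n => next^[n] x₀, rfl, fun n => ?_⟩
  simp only [Function.iterate_succ_apply', g_next]

theorem IsJungckSequence.rel_pointOfCoincidence (hs : IsJungckSequence f g s)
    (hR : IsRelClosed R f g) (hp : IsPointOfCoincidence f g p) (h₀ : R (g (s 0)) p) (n : ℕ) :
    R (g (s n)) p := by
  obtain ⟨x, hgx, hfx⟩ := hp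
  induction n with
  | zero => exact h₀
  | succ n ih =>
    rw [hgx] at ih
    rw [← hs, hfx]
    exact hR ih

end ClosedRelation

section RelContraction

variable {X Y : Type*} [PseudoMetricSpace Y] {R : Y → Y → Prop} {f g : X → Y} {α : ℝ} {p : Y}
  {s : ℕ → X}

/-- The map `f` contracts distances relative to `g` with constant `α`, along pairs of values of `g`
related by `R`. The bounds `0 ≤ α < 1` are left to the results that use them. -/
def IsRelContraction (R : Y → Y → Prop) (f g : X → Y) (α : ℝ) : Prop :=
  ∀ ⦃x y⦄, R (g x) (g y) → dist (f x) (f y) ≤ α * dist (g x) (g y)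

theorem IsRelContraction.symmGen (h : IsRelContraction R f g α) :
    IsRelContraction (SymmGen R) f g α := by
  rintro x y (hxy | hyx)
  · exact h hxy
  · rw [dist_comm (f x), dist_comm (g x)]
    exact h hyx

theorem IsRelContraction.dist_le_of_isPointOfCoincidence (hα : IsRelContraction R f g α)
    (hp : IsPointOfCoincidence f g p) {x : X} (hx : R (g x) p) :
    dist (f x) p ≤ α * dist (g x) p := by
  obtain ⟨y, hgy, hfy⟩ := hp
  have hxy : dist (f x) (f y) ≤ α * dist (g x) (g y) := hα (hgy ▸ hx)
  rwa [← hfy, ← hgy] at hxy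

theorem IsJungckSequence.dist_pointOfCoincidence_le (hs : IsJungckSequence f g s)
    (hR : IsRelClosed R f g) (hα : IsRelContraction R f g α) (hα₀ : 0 ≤ α)
    (hp : IsPointOfCoincidence f g p) (h₀ : R (g (s 0)) p) (n : ℕ) :
    dist (g (s n)) p ≤ α ^ n * dist (g (s 0)) p := by
  refine le_geom (u := fun k => dist (g (s k)) p) hα₀ n fun k _ => ?_
  rw [← hs]
  exact hα.dist_le_of_isPointOfCoincidence hp (hs.rel_pointOfCoincidence hR hp h₀ k)

theorem IsJungckSequence.tendsto_pointOfCoincidence (hs : IsJungckSequence f g s)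
    (hR : IsRelClosed R f g) (hα : IsRelContraction R f g α) (hα₀ : 0 ≤ α) (hα₁ : α < 1)
    (hp : IsPointOfCoincidence f g p) (h₀ : R (g (s 0)) p) :
    Tendsto (fun n => g (s n)) atTop (𝓝 p) := by
  have hbound : Tendsto (fun n : ℕ => α ^ n * dist (g (s 0)) p) atTop (𝓝 0) := by
    simpa only [zero_mul] using (tendsto_pow_atTop_nhds_zero_of_lt_one hα₀ hα₁).mul_const _
  exact tendsto_iff_dist_tendsto_zero.2 <| squeeze_zero (fun _ => dist_nonneg)
    (hs.dist_pointOfCoincidence_le hR hα hα₀ hp h₀) hbound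

end RelContraction

theorem IsPointOfCoincidence.eq_of_rel {X Y : Type*} [MetricSpace Y] {R : Y → Y → Prop}
    {f g : X → Y} {α : ℝ} {p q : Y} {z : X} (hp : IsPointOfCoincidence f g p)
    (hq : IsPointOfCoincidence f g q) (hfg : ∀ x, f x ∈ Set.range g) (hR : IsRelClosed R f g)
    (hα : IsRelContraction R f g α) (hα₀ : 0 ≤ α) (hα₁ : α < 1) (hzp : R (g z) p)
    (hzq : R (g z) q) : p = q := by
  obtain ⟨s, rfl, hs⟩ := exists_isJungckSequence hfg z
  exact tendsto_nhds_unique (hs.tendsto_pointOfCoincidence hR hα hα₀ hα₁ hp hzp)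
    (hs.tendsto_pointOfCoincidence hR hα hα₀ hα₁ hq hzq)

theorem unique_point_of_coincidence_directed_general {X Y : Type*} [MetricSpace Y]
    {R : Y → Y → Prop} {f g : X → Y} {α : ℝ} (hfg : ∀ x, f x ∈ Set.range g)
    (hR : IsRelClosed R f g) (hα : IsRelContraction R f g α) (hα₀ : 0 ≤ α) (hα₁ : α < 1)
    (hdir : ∀ p q, IsPointOfCoincidence f g p → IsPointOfCoincidence f g q →
      ∃ w ∈ Set.range g, SymmGen R p w ∧ SymmGen R q w) :
    {p | IsPointOfCoincidence f g p}.Subsingleton := by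
  intro p hp q hq
  obtain ⟨_, ⟨z, rfl⟩, hpz, hqz⟩ := hdir p q hp hq
  exact hp.eq_of_rel hq hfg hR.symmGen hα.symmGen hα₀ hα₁ hpz.symm hqz.symm

/-- Corollary 3, condition (u₁″): under (a), (b), (d) and
`(R|_{g(X)})^s`-directedness of `f(X)`, any two points of coincidence of `f` and
`g` are equal. -/
theorem unique_point_of_coincidence_directed {X : Type*} [MetricSpace X]
    (R : X → X → Prop) (f g : X → X)
    (ha : ∀ x : X, f x ∈ Set.range g)
    (hb : ∀ x y : X, R (g x) (g y) → R (f x) (f y))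
    (hd : ∃ α : ℝ, 0 ≤ α ∧ α < 1 ∧
      ∀ x y : X, R (g x) (g y) → dist (f x) (f y) ≤ α * dist (g x) (g y))
    (hu1'' : ∀ u ∈ Set.range f, ∀ v ∈ Set.range f,
      ∃ w ∈ Set.range g,
        ((R u w ∨ R w u) ∧ u ∈ Set.range g ∧ w ∈ Set.range g) ∧
        ((R v w ∨ R w v) ∧ v ∈ Set.range g ∧ w ∈ Set.range g)) :
    ∀ x y xb yb : X, xb = g x → xb = f x → yb = g y → yb = f y → xb = yb := by
  obtain ⟨α, hα₀, hα₁, hα⟩ := hd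
  intro x y xb yb hgx hfx hgy hfy
  refine unique_point_of_coincidence_directed_general ha hb hα hα₀ hα₁ ?_
    ⟨x, hgx, hfx⟩ ⟨y, hgy, hfy⟩
  rintro p q ⟨a, -, hfa⟩ ⟨b, -, hfb⟩
  obtain ⟨w, hw, ⟨hpw, -⟩, ⟨hqw, -⟩⟩ := hu1'' p ⟨a, hfa.symm⟩ q ⟨b, hfb.symm⟩
  exact ⟨w, hw, hpw, hqw⟩
end
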